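/- Let n be an odd positive integer. For 1 ≤ i, j ≤ n−1, let θ(i,j) be the unique angle in (0,π) satisfying cos(θ(i,j))·H_n(t_{n−1,i}) + sin(θ(i,j))·H_n(t_{n−1,j}) = 0, and set θ_c := min{ θ(i,j) : 1 ≤ i, j ≤ n−1 }. Then for every θ with 0 < θ < θ_c, the nodal set N(Φ^θ_n) is nonempty and connected, the gradient of Φ^θ_n vanishes nowhere on N(Φ^θ_n), and ℝ² \ N(Φ^θ_n) has exactly two connected components. -/

import Mathlib

/-- The physicist's Hermite polynomials: `H 0 = 1`, `H 1 = 2X`,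
`H (n+2) = 2X · H (n+1) - 2(n+1) · H n`. -/
noncomputable def H : ℕ → Polynomial ℝ
  | 0 => 1
  | 1 => Polynomial.C 2 * Polynomial.X
  | n + 2 => Polynomial.C 2 * Polynomial.X * H (n + 1) - Polynomial.C (2 * (n + 1) : ℝ) * H n

/-- The eigenfunction `Φ^θ_n(x,y) = (cos θ · H_n(x) + sin θ · H_n(y)) e^{-(x²+y²)/2}`. -/
noncomputable def Phi (n : ℕ) (θ : ℝ) : ℝ × ℝ → ℝ := fun p =>
  (Real.cos θ * (H n).eval p.1 + Real.sin θ * (H n).eval p.2) *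
    Real.exp (-(p.1 ^ 2 + p.2 ^ 2) / 2)

/-- The nodal set of `Φ^θ_n`. -/
noncomputable def nodalSet (n : ℕ) (θ : ℝ) : Set (ℝ × ℝ) := {p | Phi n θ p = 0}

/-- The number of nodal domains: the number of connected components of the
complement of the nodal set. -/
noncomputable def numNodalDomains (n : ℕ) (θ : ℝ) : ℕ :=
  {C : Set (ℝ × ℝ) | ∃ p, Phi n θ p ≠ 0 ∧
    C = connectedComponentIn {q : ℝ × ℝ | Phi n θ q ≠ 0} p}.ncard

/-!
Up to a positive factor `Φ` is `g y - f x` with `f x = -cos θ · H_n(x)` and `g y = sin θ · H_n(y)`.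
By the symmetry `H_n(-t) = -H_n(t)`, the condition `θ < θ_c` says that every critical value of `g`
is smaller in modulus than every critical value of `f`; fix a level `m` between the two. Critical
values of the two parts never cancel, so the zero set `f x = g y` is regular.

Between consecutive critical points `f` is injective with end values outside `(-m, m)`, whereas all
the oscillations of `g` take place inside `(-m, m)`. Hence over such a strip the zero set is the
graph `x = f⁻¹(g y)` over a `y`-interval, and neighbouring strips share a point.

All local maxima of `H_n` are positive because `H_n'' = -2n H_n` at critical points, so all local
minima of `f` lie below `-m`, and all those of `g` above. From a point with `f x < g y` one can
therefore move horizontally to an `x'` with `f x' ≤ -m` and then upwards without leaving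
`{f < g}`, so this set is connected; the other sign follows by `p ↦ -p`.
-/

section ConnectedComponents

open Set Filter Topology Function

variable {X Y Z : Type*} [TopologicalSpace X] [TopologicalSpace Y] [TopologicalSpace Z]

theorem connectedComponentIn_union_eq_left {U V : Set X} (hU : IsOpen U) (hV : IsOpen V)
    (hUV : Disjoint U V) (hUc : IsPreconnected U) {x : X} (hx : x ∈ U) :
    connectedComponentIn (U ∪ V) x = U := by
  refine Subset.antisymm ?_ (hUc.subset_connectedComponentIn hx subset_union_left)
  exact isPreconnected_connectedComponentIn.subset_left_of_subset_union hU hV hUV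
    (connectedComponentIn_subset _ _) ⟨x, mem_connectedComponentIn (Or.inl hx), hx⟩

theorem ncard_connectedComponentIn_union {U V : Set X} (hU : IsOpen U) (hV : IsOpen V)
    (hUV : Disjoint U V) (hUc : IsConnected U) (hVc : IsConnected V) :
    {C | ∃ x ∈ U ∪ V, C = connectedComponentIn (U ∪ V) x}.ncard = 2 := by
  have hleft : ∀ x ∈ U, connectedComponentIn (U ∪ V) x = U := fun x hx ↦
    connectedComponentIn_union_eq_left hU hV hUV hUc.isPreconnected hx
  have hright : ∀ x ∈ V, connectedComponentIn (U ∪ V) x = V := fun x hx ↦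
    union_comm U V ▸ connectedComponentIn_union_eq_left hV hU hUV.symm hVc.isPreconnected hx
  obtain ⟨u, hu⟩ := hUc.nonempty
  obtain ⟨v, hv⟩ := hVc.nonempty
  suffices {C | ∃ x ∈ U ∪ V, C = connectedComponentIn (U ∪ V) x} = {U, V} by
    rw [this, ncard_pair (hUV.ne hUc.nonempty.ne_empty)]
  ext C
  constructor
  · rintro ⟨x, hx | hx, rfl⟩
    exacts [Or.inl (hleft x hx), Or.inr (hright x hx)]
  · rintro (rfl | rfl)
    exacts [⟨u, Or.inl hu, (hleft u hu).symm⟩, ⟨v, Or.inr hv, (hright v hv).symm⟩]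

theorem isPreconnected_of_forall_exists_nhds [PreconnectedSpace Y] {S : Set X} {π : X → Y}
    (hsurj : ∀ y, ∃ x ∈ S, π x = y)
    (hloc : ∀ y, ∃ U ∈ 𝓝 y, IsPreconnected (S ∩ π ⁻¹' U)) : IsPreconnected S := by
  let R (y y' : Y) : Prop := ∀ x ∈ S, ∀ x' ∈ S, π x = y → π x' = y' →
    connectedComponentIn S x = connectedComponentIn S x'
  have hR (y y' : Y) : R y y' := by
    refine isPreconnected_univ.induction₂ R (fun y _ ↦ ?_) ?_ ?_ (mem_univ y) (mem_univ y')
    · obtain ⟨U, hU, hSU⟩ := hloc y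
      filter_upwards [mem_nhdsWithin_of_mem_nhds hU] with z hz x hx x' hx' hxy hxz
      refine connectedComponentIn_eq (hSU.subset_connectedComponentIn ?_ inter_subset_left ?_)
      exacts [⟨hx, by simpa [hxy] using mem_of_mem_nhds hU⟩, ⟨hx', by simpa [hxz] using hz⟩]
    · intro y₁ y₂ y₃ _ _ _ h₁₂ h₂₃ x hx x' hx' hxy hxy'
      obtain ⟨z, hz, hzy⟩ := hsurj y₂
      exact (h₁₂ x hx z hz hxy hzy).trans (h₂₃ z hz x' hx' hzy hxy')
    · exact fun y₁ y₂ _ _ h x hx x' hx' hxy hxy' ↦ (h x' hx' x hx hxy' hxy).symm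
  refine isPreconnected_of_forall_pair fun x hx x' hx' ↦
    ⟨connectedComponentIn S x, connectedComponentIn_subset _ _, mem_connectedComponentIn hx, ?_,
      isPreconnected_connectedComponentIn⟩
  rw [hR _ _ x hx x' hx' rfl rfl]
  exact mem_connectedComponentIn hx'

theorem continuousOn_invFunOn_image [Nonempty X] [T2Space Z] {f : X → Z} {K : Set X}
    (hK : IsCompact K) (hf : ContinuousOn f K) (hinj : InjOn f K) :
    ContinuousOn (invFunOn f K) (f '' K) := by
  refine continuousOn_iff_isClosed.2 fun T hT ↦ ⟨f '' (K ∩ T), ?_, ?_⟩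
  · exact ((hK.inter_right hT).image_of_continuousOn (hf.mono inter_subset_left)).isClosed
  · ext z
    constructor
    · rintro ⟨hzT, x, hx, rfl⟩
      rw [mem_preimage, hinj.leftInvOn_invFunOn hx] at hzT
      exact ⟨⟨x, ⟨hx, hzT⟩, rfl⟩, x, hx, rfl⟩
    · rintro ⟨⟨x, ⟨hx, hxT⟩, rfl⟩, hz⟩
      exact ⟨by rwa [mem_preimage, hinj.leftInvOn_invFunOn hx], hz⟩

theorem isPreconnected_setOf_eq_of_injOn [Nonempty X] [T2Space Z] {f : X → Z} {g : Y → Z}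
    {K : Set X} (hK : IsCompact K) (hf : ContinuousOn f K) (hinj : InjOn f K) (hg : Continuous g)
    (hpre : IsPreconnected (g ⁻¹' (f '' K))) :
    IsPreconnected {p : X × Y | p.1 ∈ K ∧ f p.1 = g p.2} := by
  have hcont : ContinuousOn (fun y ↦ (invFunOn f K (g y), y)) (g ⁻¹' (f '' K)) :=
    ((continuousOn_invFunOn_image hK hf hinj).comp hg.continuousOn fun _ hy ↦ hy).prodMk
      continuousOn_id
  convert hpre.image _ hcont using 1
  ext ⟨x, y⟩
  constructor
  · rintro ⟨hx, hxy : f x = g y⟩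
    refine ⟨y, ⟨x, hx, hxy⟩, ?_⟩
    simp only [← hxy, hinj.leftInvOn_invFunOn hx]
  · rintro ⟨y, hy, ⟨⟩⟩
    exact ⟨invFunOn_mem hy, invFunOn_eq hy⟩

theorem isConnected_setOf_neg_of_odd {G : Type*} [AddCommGroup G] [PartialOrder G]
    [IsOrderedAddMonoid G] [InvolutiveNeg X] [ContinuousNeg X] {F : X → G} (hF : F.Odd)
    (h : IsConnected {x | 0 < F x}) : IsConnected {x | F x < 0} := by
  convert h.image Neg.neg continuous_neg.continuousOn using 1
  ext x
  simp [hF.eq]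

theorem ncard_connectedComponentIn_setOf_ne_zero_of_odd {G : Type*} [AddCommGroup G]
    [LinearOrder G] [IsOrderedAddMonoid G] [TopologicalSpace G] [OrderClosedTopology G]
    [InvolutiveNeg X] [ContinuousNeg X] {F : X → G} (hF : Continuous F) (hodd : F.Odd)
    (h : IsConnected {x | 0 < F x}) :
    {C | ∃ x, F x ≠ 0 ∧ C = connectedComponentIn {x | F x ≠ 0} x}.ncard = 2 := by
  have hunion : {x | F x ≠ 0} = {x | 0 < F x} ∪ {x | F x < 0} :=
    Set.ext fun _ ↦ ne_iff_lt_or_gt.trans or_comm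
  have hcount := ncard_connectedComponentIn_union (isOpen_lt continuous_const hF)
    (isOpen_lt hF continuous_const) (disjoint_left.2 fun x (hx : 0 < F x) ↦ hx.not_gt) h
    (isConnected_setOf_neg_of_odd hodd h)
  rwa [← hunion] at hcount

theorem joinedIn_prodMk_left_of_uIcc {S : Set (ℝ × Y)} {x x' : ℝ} {y : Y}
    (h : ∀ u ∈ uIcc x x', (u, y) ∈ S) : JoinedIn S (x, y) (x', y) :=
  have hx : JoinedIn (uIcc x x') x x' :=
    (convex_uIcc x x').isPathConnected nonempty_uIcc |>.joinedIn _ left_mem_uIcc _ right_mem_uIcc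
  (hx.map (f := (·, y)) (by fun_prop)).mono (image_subset_iff.2 h)

theorem joinedIn_prodMk_right_of_uIcc {S : Set (X × ℝ)} {x : X} {y y' : ℝ}
    (h : ∀ u ∈ uIcc y y', (x, u) ∈ S) : JoinedIn S (x, y) (x, y') :=
  have hy : JoinedIn (uIcc y y') y y' :=
    (convex_uIcc y y').isPathConnected nonempty_uIcc |>.joinedIn _ left_mem_uIcc _ right_mem_uIcc
  (hy.map (f := (x, ·)) (by fun_prop)).mono (image_subset_iff.2 h)

end ConnectedComponents

section LocalExtrema

open Set Filter Topology

variable {α β : Type*} [ConditionallyCompleteLinearOrder α] [TopologicalSpace α] [OrderTopology α]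
  [LinearOrder β] [TopologicalSpace β] {f : α → β}

section OrderClosedTopology

variable [OrderClosedTopology β]

theorem exists_isLocalMin_mem_Ioo_le {a b x : α} (hf : ContinuousOn f (Icc a b))
    (hx : x ∈ Icc a b) (ha : f x < f a) (hb : f x < f b) :
    ∃ w ∈ Ioo a b, IsLocalMin f w ∧ f w ≤ f x := by
  have hends : ∀ z ∈ Icc a b \ Ioo a b, f x < f z := by
    rintro z ⟨hz, hz'⟩
    rcases eq_endpoints_or_mem_Ioo_of_mem_Icc hz with rfl | rfl | h
    exacts [ha, hb, absurd h hz']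
  obtain ⟨w, hw, hmin⟩ := isCompact_Icc.exists_isMinOn_mem_subset hf hx hends
  exact ⟨w, hw, hmin.isLocalMin (Icc_mem_nhds hw.1 hw.2), hmin hx⟩

theorem exists_isLocalMin_le_of_lt (hf : Continuous f) (htop : Tendsto f atTop atTop) {x y : α}
    (hxy : x ≤ y) (hlt : f y < f x) : ∃ w, IsLocalMin f w ∧ f w ≤ f y := by
  have : Nonempty α := ⟨x⟩
  obtain ⟨b, hb, hyb⟩ := ((htop.eventually_ge_atTop (f x)).and (eventually_ge_atTop y)).exists
  obtain ⟨w, -, hw⟩ := exists_isLocalMin_mem_Ioo_le hf.continuousOn ⟨hxy, hyb⟩ hlt (hlt.trans_le hb)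
  exact ⟨w, hw⟩

theorem exists_isLocalMax_ge_of_lt (hf : Continuous f) (hbot : Tendsto f atBot atBot) {x y : α}
    (hxy : x ≤ y) (hlt : f y < f x) : ∃ w, IsLocalMax f w ∧ f x ≤ f w :=
  exists_isLocalMin_le_of_lt (α := αᵒᵈ) (β := βᵒᵈ) hf hbot hxy hlt

theorem exists_uIcc_lt_and_le {c m : β} (hf : Continuous f) (hbot : ∃ᶠ x in atBot, c ≤ f x)
    (htop : Tendsto f atTop atBot) (hmin : ∀ w, IsLocalMin f w → f w ≤ m) {x : α} (hx : f x < c) :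
    ∃ x', (∀ u ∈ uIcc x x', f u < c) ∧ f x' ≤ m := by
  have : Nonempty α := ⟨x⟩
  by_cases hright : ∀ u, x ≤ u → f u < c
  · obtain ⟨x', hm, hx'⟩ := ((htop.eventually_le_atBot m).and (eventually_ge_atTop x)).exists
    exact ⟨x', fun u hu ↦ hright u (uIcc_of_le hx' ▸ hu).1, hm⟩
  -- Otherwise `x` lies in a bounded component `(a, b)` of `{f < c}`, where `f` has a local minimum.
  have hclosed : IsClosed {u | c ≤ f u} := isClosed_le continuous_const hf
  obtain ⟨b, ⟨hcb, hxb⟩, hb⟩ : ∃ b, IsLeast ({u | c ≤ f u} ∩ Ici x) b := by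
    push Not at hright
    obtain ⟨u, hxu, hu⟩ := hright
    exact ⟨_, (hclosed.inter isClosed_Ici).isLeast_csInf ⟨u, hu, hxu⟩ ⟨x, fun _ h ↦ h.2⟩⟩
  obtain ⟨a, ⟨hca, hax⟩, ha⟩ : ∃ a, IsGreatest ({u | c ≤ f u} ∩ Iic x) a := by
    obtain ⟨u, hu, hux⟩ := (hbot.and_eventually (eventually_le_atBot x)).exists
    exact ⟨_, (hclosed.inter isClosed_Iic).isGreatest_csSup ⟨u, hu, hux⟩ ⟨x, fun _ h ↦ h.2⟩⟩
  have hlt : ∀ u ∈ Ioo a b, f u < c := by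
    intro u hu
    by_contra! hcu
    rcases le_total x u with hxu | hux
    exacts [(hb ⟨hcu, hxu⟩).not_gt hu.2, (ha ⟨hcu, hux⟩).not_gt hu.1]
  obtain ⟨w, hw, hwmin, -⟩ := exists_isLocalMin_mem_Ioo_le hf.continuousOn ⟨hax, hxb⟩
    (hx.trans_le hca) (hx.trans_le hcb)
  have hxab : x ∈ Ioo a b :=
    ⟨hax.lt_of_ne fun h ↦ (h ▸ hx).not_ge hca, hxb.lt_of_ne fun h ↦ (h ▸ hx).not_ge hcb⟩
  exact ⟨w, fun u hu ↦ hlt u (ordConnected_Ioo.uIcc_subset hxab hw hu), hmin w hwmin⟩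

end OrderClosedTopology

section OrderTopology

variable [DenselyOrdered α] [OrderTopology β] {a b : α}

theorem injOn_Icc_of_forall_not_isLocalExtr (hf : ContinuousOn f (Icc a b))
    (hext : ∀ u ∈ Ioo a b, ¬IsLocalExtr f u) : InjOn f (Icc a b) := by
  suffices ∀ u ∈ Icc a b, ∀ v ∈ Icc a b, u < v → f u ≠ f v by
    intro u hu v hv huv
    by_contra hne
    rcases lt_or_gt_of_ne hne with h | h
    exacts [this u hu v hv h huv, this v hv u hu h huv.symm]
  intro u hu v hv huv heq
  obtain ⟨w, hw, hwext⟩ :=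
    exists_isLocalExtr_Ioo huv (hf.mono (Icc_subset_Icc hu.1 hv.2)) heq
  exact hext w ⟨hu.1.trans_lt hw.1, hw.2.trans_le hv.2⟩ hwext

theorem image_Icc_eq_uIcc_of_injOn (hab : a ≤ b) (hf : ContinuousOn f (Icc a b))
    (hinj : InjOn f (Icc a b)) : f '' Icc a b = uIcc (f a) (f b) := by
  have hmono := hf.strictMonoOn_of_injOn_Icc' hab hinj
  rw [← uIcc_of_le hab] at hf hmono ⊢
  rcases hmono with h | h
  · exact hf.image_uIcc_of_monotoneOn h.monotoneOn
  · exact hf.image_uIcc_of_antitoneOn h.antitoneOn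

end OrderTopology

theorem exists_lt_forall_mem_Ioo_notMem {α : Type*} [LinearOrder α] [NoMinOrder α] {E : Set α}
    (hE : E.Finite) {p : α → Prop} (hbot : ∃ᶠ a in atBot, p a) (hp : ∀ a ∈ E, p a) (x : α) :
    ∃ a < x, p a ∧ ∀ u ∈ Ioo a x, u ∉ E := by
  have : Nonempty α := ⟨x⟩
  obtain ⟨a₀, ha₀, ha₀x⟩ := (hbot.and_eventually (eventually_lt_atBot x)).exists
  obtain ⟨a, ⟨haE, hax⟩, hmax⟩ := exists_max_image (insert a₀ E ∩ Iio x) id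
    ((hE.insert a₀).inter_of_left _) ⟨a₀, mem_insert _ _, ha₀x⟩
  refine ⟨a, hax, ?_, fun u hu huE ↦ (hmax u ⟨Or.inr huE, hu.2⟩).not_gt hu.1⟩
  rcases haE with rfl | haE
  exacts [ha₀, hp a haE]

theorem exists_gt_forall_mem_Ioo_notMem {α : Type*} [LinearOrder α] [NoMaxOrder α] {E : Set α}
    (hE : E.Finite) {p : α → Prop} (htop : ∃ᶠ b in atTop, p b) (hp : ∀ b ∈ E, p b) (x : α) :
    ∃ b > x, p b ∧ ∀ u ∈ Ioo x b, u ∉ E := by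
  obtain ⟨b, hb, hpb, h⟩ := exists_lt_forall_mem_Ioo_notMem (α := αᵒᵈ) hE htop hp x
  exact ⟨b, hb, hpb, fun u hu ↦ h u ⟨hu.2, hu.1⟩⟩

theorem deriv_deriv_nonpos_of_isLocalMax {f : ℝ → ℝ} {x : ℝ} (hmax : IsLocalMax f x)
    (hf : ContinuousAt f x) : deriv (deriv f) x ≤ 0 := by
  by_contra! hpos
  have hmin : IsLocalMin f x := isLocalMin_of_deriv_deriv_pos hpos hmax.deriv_eq_zero hf
  have hconst : f =ᶠ[𝓝 x] fun _ ↦ f x := by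
    filter_upwards [hmax, hmin] with y h₁ h₂ using le_antisymm h₁ h₂
  have hderiv : deriv (deriv f) x = 0 := by simpa using hconst.deriv.deriv_eq
  exact hpos.ne' hderiv

end LocalExtrema

section Separated

open Set Filter Topology

theorem isPathConnected_setOf_lt {β : Type*} [LinearOrder β] [NoMaxOrder β] [TopologicalSpace β]
    [OrderClosedTopology β] {f g : ℝ → β} {m : β} (hf : Continuous f)
    (hfbot : Tendsto f atBot atTop) (hftop : Tendsto f atTop atBot)
    (hfmin : ∀ s, IsLocalMin f s → f s ≤ m) (hg : Continuous g) (hgtop : Tendsto g atTop atTop)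
    (hgmin : ∀ t, IsLocalMin g t → m < g t) :
    IsPathConnected {p : ℝ × ℝ | f p.1 < g p.2} := by
  have hup : ∀ p : ℝ × ℝ, f p.1 < g p.2 → ∃ x', ∀ y' ≥ p.2,
      JoinedIn {p : ℝ × ℝ | f p.1 < g p.2} p (x', y') := by
    rintro ⟨x, y⟩ hp
    obtain ⟨x', hpath, hx'⟩ := exists_uIcc_lt_and_le hf
      (hfbot.eventually_ge_atTop (g y)).frequently hftop hfmin hp
    refine ⟨x', fun y' hy' ↦ (joinedIn_prodMk_left_of_uIcc hpath).trans
      (joinedIn_prodMk_right_of_uIcc fun v hv ↦ ?_)⟩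
    have hyv : y ≤ v := (uIcc_of_le hy' ▸ hv).1
    rcases le_or_gt (g y) (g v) with hle | hlt
    · exact (hpath x' right_mem_uIcc).trans_le hle
    · obtain ⟨t, ht, htv⟩ := exists_isLocalMin_le_of_lt hg hgtop hyv hlt
      exact (hx'.trans_lt (hgmin t ht)).trans_le htv
  refine isPathConnected_iff.2 ⟨?_, fun p hp q hq ↦ ?_⟩
  · obtain ⟨y, hy⟩ := (hgtop.eventually_gt_atTop (f 0)).exists
    exact ⟨(0, y), hy⟩
  · have : Nonempty β := ⟨m⟩
    obtain ⟨x₁, h₁⟩ := hup p hp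
    obtain ⟨x₂, h₂⟩ := hup q hq
    obtain ⟨c, hc⟩ := (isCompact_uIcc (a := x₁) (b := x₂)).bddAbove_image hf.continuousOn
    obtain ⟨y, hcy, hpy, hqy⟩ := ((hgtop.eventually_gt_atTop c).and
      ((eventually_ge_atTop p.2).and (eventually_ge_atTop q.2))).exists
    have hbridge : JoinedIn {p : ℝ × ℝ | f p.1 < g p.2} (x₁, y) (x₂, y) :=
      joinedIn_prodMk_left_of_uIcc fun u hu ↦ (hc ⟨u, hu, rfl⟩).trans_lt hcy
    exact ((h₁ y hpy).trans hbridge).trans (h₂ y hqy).symm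

variable {f g : ℝ → ℝ} {m : ℝ}

theorem ordConnected_preimage_uIcc (hg : Continuous g) (hgbot : Tendsto g atBot atBot)
    (hgtop : Tendsto g atTop atTop) (hgm : ∀ t, IsLocalExtr g t → |g t| < m) {a b : ℝ}
    (ha : m ≤ |a|) (hb : m ≤ |b|) : OrdConnected (g ⁻¹' uIcc a b) := by
  have hdrop {y y' : ℝ} (hy : y ≤ y') (hlt : g y' < g y) : -m < g y' ∧ g y < m := by
    obtain ⟨s, hs, hsy⟩ := exists_isLocalMin_le_of_lt hg hgtop hy hlt
    obtain ⟨t, ht, hty⟩ := exists_isLocalMax_ge_of_lt hg hgbot hy hlt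
    exact ⟨(abs_lt.1 (hgm s (Or.inl hs))).1.trans_le hsy,
      hty.trans_lt (abs_lt.1 (hgm t (Or.inr ht))).2⟩
  wlog hab : a ≤ b generalizing a b
  · exact uIcc_comm a b ▸ this hb ha (le_of_not_ge hab)
  rw [uIcc_of_le hab]
  refine ⟨fun y₁ h₁ y₂ h₂ y hy ↦ ⟨?_, ?_⟩⟩
  · by_contra! hlt
    obtain ⟨h, h'⟩ := hdrop hy.1 (hlt.trans_le h₁.1)
    rcases le_abs.1 ha with h'' | h'' <;> linarith [h₁.1]
  · by_contra! hlt
    obtain ⟨h, h'⟩ := hdrop hy.2 (h₂.2.trans_lt hlt)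
    rcases le_abs.1 hb with h'' | h'' <;> linarith [h₂.2]

theorem isPreconnected_setOf_eq_strip (hg : Continuous g) (hgbot : Tendsto g atBot atBot)
    (hgtop : Tendsto g atTop atTop) (hgm : ∀ t, IsLocalExtr g t → |g t| < m) {a b : ℝ}
    (hab : a ≤ b) (hf : ContinuousOn f (Icc a b)) (hext : ∀ u ∈ Ioo a b, ¬IsLocalExtr f u)
    (ha : m ≤ |f a|) (hb : m ≤ |f b|) :
    IsPreconnected {p : ℝ × ℝ | p.1 ∈ Icc a b ∧ f p.1 = g p.2} := by
  have hinj := injOn_Icc_of_forall_not_isLocalExtr hf hext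
  refine isPreconnected_setOf_eq_of_injOn isCompact_Icc hf hinj hg ?_
  rw [image_Icc_eq_uIcc_of_injOn hab hf hinj]
  exact (ordConnected_preimage_uIcc hg hgbot hgtop hgm ha hb).isPreconnected

theorem isConnected_setOf_eq (hf : Continuous f) (hfbot : ∃ᶠ x in atBot, m ≤ |f x|)
    (hftop : ∃ᶠ x in atTop, m ≤ |f x|) (hfin : {s | IsLocalExtr f s}.Finite)
    (hfm : ∀ s, IsLocalExtr f s → m ≤ |f s|) (hg : Continuous g) (hgbot : Tendsto g atBot atBot)
    (hgtop : Tendsto g atTop atTop) (hgm : ∀ t, IsLocalExtr g t → |g t| < m) :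
    IsConnected {p : ℝ × ℝ | f p.1 = g p.2} := by
  have hfibre (x : ℝ) : ∃ y, f x = g y := (hg.surjective hgtop hgbot (f x)).imp fun _ h ↦ h.symm
  obtain ⟨y₀, hy₀⟩ := hfibre 0
  refine ⟨⟨(0, y₀), hy₀⟩, isPreconnected_of_forall_exists_nhds (π := Prod.fst)
    (fun x ↦ (hfibre x).elim fun y hy ↦ ⟨(x, y), hy, rfl⟩) fun x ↦ ?_⟩
  obtain ⟨a, hax, ha, hleft⟩ := exists_lt_forall_mem_Ioo_notMem hfin hfbot hfm x
  obtain ⟨b, hxb, hb, hright⟩ := exists_gt_forall_mem_Ioo_notMem hfin hftop hfm x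
  refine ⟨Icc a b, Icc_mem_nhds hax hxb, ?_⟩
  suffices IsPreconnected {p : ℝ × ℝ | p.1 ∈ Icc a b ∧ f p.1 = g p.2} by
    rwa [show {p : ℝ × ℝ | f p.1 = g p.2} ∩ Prod.fst ⁻¹' Icc a b =
      {p | p.1 ∈ Icc a b ∧ f p.1 = g p.2} from inter_comm _ _]
  by_cases hx : IsLocalExtr f x
  · obtain ⟨y, hy⟩ := hfibre x
    have hunion : {p : ℝ × ℝ | p.1 ∈ Icc a b ∧ f p.1 = g p.2} =
        {p | p.1 ∈ Icc a x ∧ f p.1 = g p.2} ∪ {p | p.1 ∈ Icc x b ∧ f p.1 = g p.2} := by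
      rw [← Icc_union_Icc_eq_Icc hax.le hxb.le]
      ext p
      exact or_and_right
    rw [hunion]
    exact (isPreconnected_setOf_eq_strip hg hgbot hgtop hgm hax.le hf.continuousOn hleft ha
      (hfm x hx)).union (x, y) ⟨⟨hax.le, le_rfl⟩, hy⟩ ⟨⟨le_rfl, hxb.le⟩, hy⟩
      (isPreconnected_setOf_eq_strip hg hgbot hgtop hgm hxb.le hf.continuousOn hright (hfm x hx) hb)
  · refine isPreconnected_setOf_eq_strip hg hgbot hgtop hgm (hax.trans hxb).le hf.continuousOn
      (fun u hu ↦ ?_) ha hb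
    rcases lt_trichotomy u x with h | rfl | h
    exacts [hleft u ⟨hu.1, h⟩, hx, hright u ⟨h, hu.2⟩]

end Separated

section Hermite

open Polynomial Filter

theorem H_add_two (n : ℕ) : H (n + 2) = 2 * X * H (n + 1) - 2 * (n + 1 : ℝ[X]) * H n := by
  simp [H, ← map_ofNat C]

theorem derivative_H (n : ℕ) : derivative (H n) = 2 * (n : ℝ[X]) * H (n - 1) := by
  induction n using Nat.twoStepInduction with
  | zero => simp [H]
  | one => simp [H, ← map_ofNat C]
  | more n ih ih' =>
    have hrec : 2 * (n : ℝ[X]) * H (n - 1) = 2 * X * H n - H (n + 1) := by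
      cases n with
      | zero => simp [H, ← map_ofNat C]
      | succ n => simp [H_add_two]
    simp only [H_add_two, derivative_sub, derivative_mul, ih, ih', hrec, derivative_X,
      derivative_add, derivative_natCast, derivative_one, derivative_ofNat, Nat.add_sub_cancel]
    push_cast
    ring

theorem H_succ (n : ℕ) : H (n + 1) = 2 * X * H n - derivative (H n) := by
  rw [derivative_H]
  cases n with
  | zero => simp [H, ← map_ofNat C]
  | succ n => simp [H_add_two]

theorem derivative_derivative_H (n : ℕ) :
    derivative (derivative (H n)) = 2 * X * derivative (H n) - 2 * (n : ℝ[X]) * H n := by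
  have h := congrArg derivative (H_succ n)
  simp only [derivative_H (n + 1), derivative_sub, derivative_mul, derivative_X, derivative_ofNat,
    Nat.add_sub_cancel, Nat.cast_add, Nat.cast_one] at h
  linear_combination h

theorem eval_H_neg (n : ℕ) (x : ℝ) : (H n).eval (-x) = (-1) ^ n * (H n).eval x := by
  induction n using Nat.twoStepInduction with
  | zero => simp [H]
  | one => simp [H]
  | more n ih ih' =>
    simp only [H_add_two, eval_sub, eval_mul, eval_ofNat, eval_X, eval_add, eval_natCast, eval_one,
      ih, ih']
    ring

theorem eval_H_succ_ne_zero {n : ℕ} {x : ℝ} (hx : (H n).eval x = 0) : (H (n + 1)).eval x ≠ 0 := by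
  induction n with
  | zero => simp [H] at hx
  | succ n ih =>
    intro hx'
    have h : 2 * ((n : ℝ) + 1) * (H n).eval x = 0 := by simpa [H_add_two, hx] using hx'
    exact ih ((mul_eq_zero.1 h).resolve_left (by positivity)) hx

theorem H_ne_zero (n : ℕ) : H n ≠ 0 := fun h ↦
  eval_H_succ_ne_zero (n := n) (x := 0) (by simp [h]) (by simp [H_succ, h])

theorem degree_derivative_H_lt (n : ℕ) : (derivative (H n)).degree < (2 * X * H n).degree := by
  have h2X : (0 : WithBot ℕ) ≤ (2 * X : ℝ[X]).degree := zero_le_degree_iff.2 (by simp)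
  refine (degree_derivative_lt (H_ne_zero n)).trans_le ?_
  simpa only [degree_mul] using le_add_of_nonneg_left h2X

theorem degree_H (n : ℕ) : (H n).degree = n := by
  induction n with
  | zero => simp [H]
  | succ n ih =>
    rw [H_succ, degree_sub_eq_left_of_degree_lt (degree_derivative_H_lt n), ← map_ofNat C,
      degree_mul, degree_C_mul_X two_ne_zero, ih, Nat.cast_succ, add_comm]

theorem leadingCoeff_H (n : ℕ) : (H n).leadingCoeff = 2 ^ n := by
  induction n with
  | zero => simp [H]
  | succ n ih =>
    rw [H_succ, leadingCoeff_sub_of_degree_lt (degree_derivative_H_lt n), ← map_ofNat C,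
      leadingCoeff_mul, leadingCoeff_C_mul_X, ih, pow_succ']

theorem tendsto_eval_H_atTop {n : ℕ} (hn : n ≠ 0) :
    Tendsto (fun x ↦ (H n).eval x) atTop atTop :=
  (H n).tendsto_atTop_of_leadingCoeff_nonneg (by simpa [degree_H] using hn.pos)
    (by simp [leadingCoeff_H])

theorem tendsto_eval_H_atBot {n : ℕ} (hn : Odd n) :
    Tendsto (fun x ↦ (H n).eval x) atBot atBot := by
  have h := tendsto_neg_atTop_atBot.comp ((tendsto_eval_H_atTop hn.pos.ne').comp
    tendsto_neg_atBot_atTop)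
  refine h.congr fun x ↦ ?_
  simp [eval_H_neg, hn.neg_one_pow]

theorem eval_derivative_H_eq_zero_iff {n : ℕ} (hn : n ≠ 0) {x : ℝ} :
    (derivative (H n)).eval x = 0 ↔ (H (n - 1)).eval x = 0 := by
  simp [derivative_H, hn]

theorem finite_setOf_eval_derivative_H_eq_zero {n : ℕ} (hn : n ≠ 0) :
    {t | (derivative (H n)).eval t = 0}.Finite :=
  finite_setOfPred_isRoot <| by simpa [derivative_H, hn] using H_ne_zero _

theorem exists_eval_derivative_H_eq_zero_of_abs_eq {n : ℕ} (hn : Odd n) {s c : ℝ}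
    (hs : (derivative (H n)).eval s = 0) (hc : |c| = |(H n).eval s|) :
    ∃ s', (derivative (H n)).eval s' = 0 ∧ (H n).eval s' = c := by
  rcases abs_eq_abs.1 hc with rfl | rfl
  · exact ⟨s, hs, rfl⟩
  · refine ⟨-s, ?_, by simp [eval_H_neg, hn.neg_one_pow]⟩
    rw [eval_derivative_H_eq_zero_iff hn.pos.ne'] at hs ⊢
    rw [eval_H_neg, hs, mul_zero]

theorem eval_derivative_H_ne_zero {n : ℕ} {x : ℝ} (hx : (H n).eval x = 0) :
    (derivative (H n)).eval x ≠ 0 := by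
  have h := eval_H_succ_ne_zero hx
  simpa [H_succ, hx] using h

theorem eval_derivative_eq_zero_of_isLocalExtr {p : ℝ[X]} {c t : ℝ} (hc : c ≠ 0)
    (h : IsLocalExtr (fun x ↦ c * p.eval x) t) : (derivative p).eval t = 0 := by
  simpa [hc] using h.deriv_eq_zero

theorem eval_H_pos_of_isLocalMax {n : ℕ} {t : ℝ} (ht : IsLocalMax (fun x ↦ (H n).eval x) t) :
    0 < (H n).eval t := by
  rcases n.eq_zero_or_pos with rfl | hn
  · simp [H]
  have hcrit : (derivative (H n)).eval t = 0 := by simpa using ht.deriv_eq_zero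
  have hconcave : (derivative (derivative (H n))).eval t ≤ 0 := by
    have h : deriv (fun x ↦ (H n).eval x) = fun x ↦ (derivative (H n)).eval x :=
      funext fun x ↦ Polynomial.deriv _
    simpa [h] using deriv_deriv_nonpos_of_isLocalMax ht (H n).continuousAt
  have hode : (derivative (derivative (H n))).eval t = -(2 * n * (H n).eval t) := by
    simp [derivative_derivative_H, hcrit]
  have hne : (H n).eval t ≠ 0 := fun h ↦ eval_derivative_H_ne_zero h hcrit
  have hn' : (0 : ℝ) < 2 * n := by positivity
  exact hne.symm.lt_of_le (nonneg_of_mul_nonneg_right (by linarith) hn')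

end Hermite

section Gradient

open ContinuousLinearMap

variable {𝕜 : Type*} [NontriviallyNormedField 𝕜]

theorem fderiv_mul_of_eq_zero {E 𝔸 : Type*} [NormedAddCommGroup E] [NormedSpace 𝕜 E]
    [NormedCommRing 𝔸] [NormedAlgebra 𝕜 𝔸] {F e : E → 𝔸} {p : E} (hF : DifferentiableAt 𝕜 F p)
    (he : DifferentiableAt 𝕜 e p) (hp : F p = 0) :
    fderiv 𝕜 (fun q ↦ F q * e q) p = e p • fderiv 𝕜 F p := by
  ext v
  simp [fderiv_fun_mul hF he, hp]

theorem fderiv_add_comp_fst_snd_ne_zero {u v : 𝕜 → 𝕜} {p : 𝕜 × 𝕜}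
    (hu : DifferentiableAt 𝕜 u p.1) (hv : DifferentiableAt 𝕜 v p.2)
    (h : deriv u p.1 ≠ 0 ∨ deriv v p.2 ≠ 0) :
    fderiv 𝕜 (fun q : 𝕜 × 𝕜 ↦ u q.1 + v q.2) p ≠ 0 := by
  have hu' : HasFDerivAt (fun q : 𝕜 × 𝕜 ↦ u q.1) (deriv u p.1 • fst 𝕜 𝕜 𝕜) p :=
    hu.hasDerivAt.comp_hasFDerivAt (f := Prod.fst) p hasFDerivAt_fst
  have hv' : HasFDerivAt (fun q : 𝕜 × 𝕜 ↦ v q.2) (deriv v p.2 • snd 𝕜 𝕜 𝕜) p :=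
    hv.hasDerivAt.comp_hasFDerivAt (f := Prod.snd) p hasFDerivAt_snd
  rw [(hu'.fun_add hv').fderiv]
  intro hzero
  have hx : deriv u p.1 = 0 := by simpa using DFunLike.congr_fun hzero (1, 0)
  have hy : deriv v p.2 = 0 := by simpa using DFunLike.congr_fun hzero (0, 1)
  exact h.elim (· hx) (· hy)

end Gradient

section Phi

open Real

variable {n : ℕ} {θ : ℝ}

theorem Phi_eq_zero_iff {p : ℝ × ℝ} :
    Phi n θ p = 0 ↔ -cos θ * (H n).eval p.1 = sin θ * (H n).eval p.2 := by
  rw [Phi, mul_eq_zero_iff_right (Real.exp_ne_zero _), add_eq_zero_iff_neg_eq, neg_mul]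

theorem Phi_pos_iff {p : ℝ × ℝ} :
    0 < Phi n θ p ↔ -cos θ * (H n).eval p.1 < sin θ * (H n).eval p.2 := by
  rw [Phi, mul_pos_iff_of_pos_right (Real.exp_pos _), neg_mul, neg_lt_iff_pos_add']

theorem continuous_Phi (n : ℕ) (θ : ℝ) : Continuous (Phi n θ) := by
  unfold Phi
  fun_prop

theorem odd_Phi (hn : Odd n) (θ : ℝ) : (Phi n θ).Odd := fun p ↦ by
  simp only [Phi, Prod.fst_neg, Prod.snd_neg, eval_H_neg, hn.neg_one_pow, neg_sq]
  ring

end Phi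

section SeparatedCriticalValues

open Polynomial Real Set Filter Topology

theorem sin_mul_lt_cos_mul_of_lt {α θ a b : ℝ} (hα : α ∈ Ioo 0 π) (hθ : 0 < θ) (hlt : θ < α)
    (ha : 0 < a) (h : cos α * a = sin α * b) : sin θ * b < cos θ * a := by
  have hsinα : 0 < sin α := sin_pos_of_mem_Ioo hα
  have hsin : 0 < sin (α - θ) := sin_pos_of_pos_of_lt_pi (sub_pos.2 hlt) (by linarith [hα.2])
  rw [sin_sub] at hsin
  refine lt_of_mul_lt_mul_left ?_ hsinα.le
  linear_combination a * hsin - sin θ * h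

/-- The critical values of the `y`-part `sin θ · H_n` of `Φ^θ_n` are all smaller in modulus than
those of the `x`-part `cos θ · H_n`. It is through this
separation that the condition `θ < θ_c` enters. -/
def SeparatedCriticalValues (n : ℕ) (θ : ℝ) : Prop :=
  ∀ s t : ℝ, (derivative (H n)).eval s = 0 → (derivative (H n)).eval t = 0 →
    sin θ * |(H n).eval t| < cos θ * |(H n).eval s|

variable {n : ℕ} {θ : ℝ}

theorem separatedCriticalValues_of_lt (hn : Odd n) (hθ : 0 < θ)
    (h : ∀ s t : ℝ, (derivative (H n)).eval s = 0 → (derivative (H n)).eval t = 0 →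
      ∃ α ∈ Ioo 0 π, θ < α ∧ cos α * (H n).eval s + sin α * (H n).eval t = 0) :
    SeparatedCriticalValues n θ := by
  intro s t hs ht
  obtain ⟨s', hs', hHs'⟩ := exists_eval_derivative_H_eq_zero_of_abs_eq hn hs (abs_abs _)
  obtain ⟨t', ht', hHt'⟩ := exists_eval_derivative_H_eq_zero_of_abs_eq hn ht (c := -|(H n).eval t|)
    (by rw [abs_neg, abs_abs])
  obtain ⟨α, hα, hlt, heq⟩ := h s' t' hs' ht'
  have hpos : 0 < |(H n).eval s| := abs_pos.2 fun h₀ ↦ eval_derivative_H_ne_zero h₀ hs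
  refine sin_mul_lt_cos_mul_of_lt hα hθ hlt hpos ?_
  rw [hHs', hHt'] at heq
  linear_combination heq

namespace SeparatedCriticalValues

theorem exists_level (hsep : SeparatedCriticalValues n θ) (hn : n ≠ 0) (hsin : 0 ≤ sin θ) :
    ∃ m, (∀ t, (derivative (H n)).eval t = 0 → |sin θ * (H n).eval t| < m) ∧
      ∀ s, (derivative (H n)).eval s = 0 → m < cos θ * |(H n).eval s| := by
  have hfin := finite_setOf_eval_derivative_H_eq_zero hn
  obtain ⟨m, hy, hx⟩ := Finite.exists_between' (hfin.image fun t ↦ sin θ * |(H n).eval t|)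
    (hfin.image fun s ↦ cos θ * |(H n).eval s|)
    (forall_mem_image.2 fun t ht ↦ forall_mem_image.2 fun s hs ↦ hsep s t hs ht)
  refine ⟨m, fun t ht ↦ ?_, forall_mem_image.1 hx⟩
  rw [abs_mul, abs_of_nonneg hsin]
  exact forall_mem_image.1 hy ht

theorem cos_pos (hsep : SeparatedCriticalValues n θ) (hsin : 0 < sin θ) {s : ℝ}
    (hs : (derivative (H n)).eval s = 0) : 0 < cos θ :=
  pos_of_mul_pos_left ((by positivity : (0 : ℝ) ≤ _).trans_lt (hsep s s hs hs)) (abs_nonneg _)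

theorem isConnected_nodalSet (hsep : SeparatedCriticalValues n θ) (hn : Odd n) (hsin : 0 < sin θ)
    (hcos : 0 < cos θ) : IsConnected (nodalSet n θ) := by
  obtain ⟨m, hmy, hmx⟩ := hsep.exists_level hn.pos.ne' hsin.le
  have hc : -cos θ < 0 := neg_neg_of_pos hcos
  have hbot := (tendsto_eval_H_atBot hn).const_mul_atBot_of_neg hc
  have htop := (tendsto_eval_H_atTop hn.pos.ne').const_mul_atTop_of_neg hc
  simp only [nodalSet, Phi_eq_zero_iff]
  refine isConnected_setOf_eq (m := m) (by fun_prop)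
    ((tendsto_abs_atTop_atTop.comp hbot).eventually_ge_atTop m).frequently
    ((tendsto_abs_atBot_atTop.comp htop).eventually_ge_atTop m).frequently
    ((finite_setOf_eval_derivative_H_eq_zero hn.pos.ne').subset fun s hs ↦
      eval_derivative_eq_zero_of_isLocalExtr hc.ne hs)
    (fun s hs ↦ ?_) (by fun_prop) ((tendsto_eval_H_atBot hn).const_mul_atBot hsin)
    ((tendsto_eval_H_atTop hn.pos.ne').const_mul_atTop hsin) fun t ht ↦ ?_
  · rw [abs_mul, abs_neg, abs_of_pos hcos]
    exact (hmx s (eval_derivative_eq_zero_of_isLocalExtr hc.ne hs)).le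
  · exact hmy t (eval_derivative_eq_zero_of_isLocalExtr hsin.ne' ht)

theorem isPathConnected_setOf_Phi_pos (hsep : SeparatedCriticalValues n θ) (hn : Odd n)
    (hsin : 0 < sin θ) (hcos : 0 < cos θ) : IsPathConnected {p | 0 < Phi n θ p} := by
  obtain ⟨m, hmy, hmx⟩ := hsep.exists_level hn.pos.ne' hsin.le
  have hc : -cos θ < 0 := neg_neg_of_pos hcos
  simp only [Phi_pos_iff]
  refine isPathConnected_setOf_lt (m := -m) (by fun_prop)
    ((tendsto_eval_H_atBot hn).const_mul_atBot_of_neg hc)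
    ((tendsto_eval_H_atTop hn.pos.ne').const_mul_atTop_of_neg hc) (fun s hs ↦ ?_) (by fun_prop)
    ((tendsto_eval_H_atTop hn.pos.ne').const_mul_atTop hsin) fun t ht ↦ ?_
  · have hmax : IsLocalMax (fun x ↦ (H n).eval x) s :=
      hs.mono fun x hx ↦ (mul_le_mul_left_of_neg hc).1 hx
    have hlt := hmx s (eval_derivative_eq_zero_of_isLocalExtr hc.ne (Or.inl hs))
    rw [abs_of_pos (eval_H_pos_of_isLocalMax hmax)] at hlt
    linarith
  · exact (abs_lt.1 (hmy t (eval_derivative_eq_zero_of_isLocalExtr hsin.ne' (Or.inl ht)))).1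

theorem numNodalDomains_eq_two (hsep : SeparatedCriticalValues n θ) (hn : Odd n)
    (hsin : 0 < sin θ) (hcos : 0 < cos θ) : numNodalDomains n θ = 2 :=
  ncard_connectedComponentIn_setOf_ne_zero_of_odd (continuous_Phi n θ) (odd_Phi hn θ)
    (hsep.isPathConnected_setOf_Phi_pos hn hsin hcos).isConnected

theorem fderiv_Phi_ne_zero (hsep : SeparatedCriticalValues n θ) (hsin : 0 < sin θ)
    (hcos : 0 < cos θ) {p : ℝ × ℝ} (hp : p ∈ nodalSet n θ) : fderiv ℝ (Phi n θ) p ≠ 0 := by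
  have hzero : -cos θ * (H n).eval p.1 = sin θ * (H n).eval p.2 := Phi_eq_zero_iff.1 hp
  have hcrit : (derivative (H n)).eval p.1 ≠ 0 ∨ (derivative (H n)).eval p.2 ≠ 0 := by
    by_contra! h
    have habs := congrArg abs hzero
    rw [abs_mul, abs_mul, abs_neg, abs_of_pos hcos, abs_of_pos hsin] at habs
    exact (hsep p.1 p.2 h.1 h.2).ne' habs
  unfold Phi
  rw [fderiv_mul_of_eq_zero (by fun_prop) (by fun_prop) (by linarith)]
  refine smul_ne_zero (Real.exp_ne_zero _) (fderiv_add_comp_fst_snd_ne_zero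
    (u := fun x ↦ cos θ * (H n).eval x) (v := fun y ↦ sin θ * (H n).eval y) (by fun_prop)
    (by fun_prop) ?_)
  simpa [hsin.ne', hcos.ne'] using hcrit

end SeparatedCriticalValues

end SeparatedCriticalValues

open Real Set in
/-- **Proposition 5.1.** Let `n` be odd, let `t' 0 < t' 1 < ⋯` enumerate the `n-1`
zeros of `H_{n-1}`, and for `i, j` let `θij i j ∈ (0,π)` be the unique angle with
`cos(θij i j)·H_n(t' i) + sin(θij i j)·H_n(t' j) = 0`.  If `θc` is the least element of
`{θij i j}` then for every `0 < θ < θc` the nodal set `N(Φ^θ_n)` is a nonempty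
connected regular curve and `Φ^θ_n` has exactly two nodal domains. -/
theorem two_nodal_domains_below_theta_c (n : ℕ) (hodd : Odd n) (hpos : 0 < n)
    (t' : Fin (n - 1) → ℝ) (ht'mono : StrictMono t')
    (ht'zero : ∀ x : ℝ, (H (n - 1)).eval x = 0 ↔ ∃ i, x = t' i)
    (θij : Fin (n - 1) → Fin (n - 1) → ℝ)
    (hθmem : ∀ i j, θij i j ∈ Set.Ioo 0 π)
    (hθeq : ∀ i j,
      Real.cos (θij i j) * (H n).eval (t' i) + Real.sin (θij i j) * (H n).eval (t' j) = 0)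
    (θc : ℝ) (hθc : IsLeast {θ : ℝ | ∃ i j, θ = θij i j} θc)
    (θ : ℝ) (hθpos : 0 < θ) (hθlt : θ < θc) :
    (nodalSet n θ).Nonempty ∧
    IsConnected (nodalSet n θ) ∧
    (∀ p ∈ nodalSet n θ, fderiv ℝ (Phi n θ) p ≠ 0) ∧
    numNodalDomains n θ = 2 := by
  obtain ⟨i₀, j₀, rfl⟩ := hθc.1
  have hcrit (x : ℝ) : (Polynomial.derivative (H n)).eval x = 0 ↔ ∃ i, x = t' i :=
    (eval_derivative_H_eq_zero_iff hpos.ne').trans (ht'zero x)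
  have hsep : SeparatedCriticalValues n θ := by
    refine separatedCriticalValues_of_lt hodd hθpos fun s t hs ht ↦ ?_
    obtain ⟨i, rfl⟩ := (hcrit s).1 hs
    obtain ⟨j, rfl⟩ := (hcrit t).1 ht
    exact ⟨θij i j, hθmem i j, hθlt.trans_le (hθc.2 ⟨i, j, rfl⟩), hθeq i j⟩
  have hsin : 0 < sin θ := sin_pos_of_pos_of_lt_pi hθpos (hθlt.trans (hθmem i₀ j₀).2)
  have hcos : 0 < cos θ := hsep.cos_pos hsin ((hcrit (t' i₀)).2 ⟨i₀, rfl⟩)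
  have hconn := hsep.isConnected_nodalSet hodd hsin hcos
  exact ⟨hconn.nonempty, hconn, fun p hp ↦ hsep.fderiv_Phi_ne_zero hsin hcos hp,
    hsep.numNodalDomains_eq_two hodd hsin hcos⟩
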